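/- Let m ≥ 1, let H be a finite field, and let F be a field extension of H of degree exactly m (i.e., F is an H-vector space of dimension m). Let A ⊆ (Fin m → F) be a set of size |A| = α·|F|^m. Then the number of tuples (h₁, …, h_m, t₁, …, t_m) with each hᵢ ∈ H^m and each tᵢ ∈ F such that the vector ∑_{i=1}^m tᵢ • ι(hᵢ) lies in A is at most (α + 2/|H|)·|H|^{m²}·|F|^m, where ι : H^m → F^m applies the field inclusion H ↪ F componentwise and tᵢ • v multiplies each component of v ∈ F^m by tᵢ ∈ F. (Equivalently: for h₁,…,h_m ∈ H^m and t₁,…,t_m ∈ F chosen uniformly and independently, Pr[∑ᵢ tᵢ • ι(hᵢ) ∈ A] ≤ α + 2/|H|.) -/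

import Mathlib

open scoped Classical

/-!
A fixed matrix `h` over `H` acts on tuples of vectors; when `h` is invertible this action is
injective, so at most `|A|` tuples `t` are sent into `A`. When `h` is singular, all `|F| ^ m` tuples
are counted. The proportion of singular matrices is `1 - ∏ⱼ (1 - |H|⁻ʲ) ≤ ∑ⱼ |H|⁻ʲ ≤ 2 / |H|`.
-/

section Inequalities

theorem one_sub_sum_le_prod_one_sub {ι R : Type*} [CommRing R] [PartialOrder R]
    [IsOrderedRing R] (s : Finset ι) {f : ι → R} (h₀ : ∀ i ∈ s, 0 ≤ f i)
    (h₁ : ∀ i ∈ s, f i ≤ 1) : 1 - ∑ i ∈ s, f i ≤ ∏ i ∈ s, (1 - f i) := by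
  induction s using Finset.induction_on with
  | empty => simp
  | insert a s ha ih =>
    rw [Finset.forall_mem_insert] at h₀ h₁
    have hprod : ∏ i ∈ s, (1 - f i) ≤ 1 :=
      Finset.prod_le_one (fun i hi => sub_nonneg.2 (h₁.2 i hi))
        fun i hi => sub_le_self 1 (h₀.2 i hi)
    rw [Finset.sum_insert ha, Finset.prod_insert ha]
    calc 1 - (f a + ∑ i ∈ s, f i)
      _ = 1 - ∑ i ∈ s, f i - f a := by ring
      _ ≤ ∏ i ∈ s, (1 - f i) - f a * ∏ i ∈ s, (1 - f i) :=
        sub_le_sub (ih h₀.2 h₁.2) (mul_le_of_le_one_right h₀.1 hprod)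
      _ = (1 - f a) * ∏ i ∈ s, (1 - f i) := by ring

theorem sum_range_inv_pow_succ_le_two_div {K : Type*} [Field K] [LinearOrder K]
    [IsStrictOrderedRing K] {q : K} (hq : 2 ≤ q) (n : ℕ) :
    ∑ j ∈ Finset.range n, q⁻¹ ^ (j + 1) ≤ 2 / q := by
  have hq₀ : 0 < q := two_pos.trans_le hq
  have hinv : q⁻¹ ≤ 2⁻¹ := inv_anti₀ two_pos hq
  have hinv₀ : 0 ≤ q⁻¹ := inv_nonneg.2 hq₀.le
  have hgeom : ∑ j ∈ Finset.range n, q⁻¹ ^ j ≤ 2 :=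
    calc ∑ j ∈ Finset.range n, q⁻¹ ^ j
      _ ≤ 1 / (1 - q⁻¹) := by
        simpa using geom_sum_Ico_le_of_lt_one (m := 0) (n := n) hinv₀ (by linarith)
      _ ≤ 2 := by rw [div_le_iff₀ (by linarith)]; linarith
  calc ∑ j ∈ Finset.range n, q⁻¹ ^ (j + 1)
    _ = (∑ j ∈ Finset.range n, q⁻¹ ^ j) * q⁻¹ := by simp only [pow_succ, Finset.sum_mul]
    _ ≤ 2 * q⁻¹ := by gcongr
    _ = 2 / q := (div_eq_mul_inv 2 q).symm

end Inequalities

section Counting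

theorem card_filter_isUnit (M : Type*) [Monoid M] [Fintype M] :
    (Finset.univ.filter (IsUnit : M → Prop)).card = Nat.card Mˣ := by
  rw [← Fintype.card_subtype, ← Nat.card_eq_fintype_card]
  exact (Nat.card_congr Submonoid.unitsTypeEquivIsUnitSubmonoid.toEquiv).symm

theorem card_filter_mem_le_of_injective {Y Z : Type*} [Fintype Y] [DecidableEq Z] {f : Y → Z}
    (hf : Function.Injective f) (A : Finset Z) :
    (Finset.univ.filter (fun y => f y ∈ A)).card ≤ A.card :=
  Finset.card_le_card_of_injOn f (fun y hy => by simpa using hy) hf.injOn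

theorem card_filter_prod_mem_le {X Y Z : Type*} [Fintype X] [Fintype Y] [DecidableEq Z]
    (f : X → Y → Z) (A : Finset Z) :
    (Finset.univ.filter (fun p : X × Y => f p.1 p.2 ∈ A)).card
      ≤ Fintype.card X * A.card
        + (Finset.univ.filter (fun x => ¬ Function.Injective (f x))).card * Fintype.card Y := by
  have hfiber (x : X) : (Finset.univ.filter (fun y => f x y ∈ A)).card
      ≤ A.card + if ¬ Function.Injective (f x) then Fintype.card Y else 0 := by
    split_ifs with hx
    · exact card_filter_mem_le_of_injective hx A
    · exact (Finset.card_le_univ _).trans (Nat.le_add_left _ _)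
  calc (Finset.univ.filter (fun p : X × Y => f p.1 p.2 ∈ A)).card
    _ = ∑ x, (Finset.univ.filter (fun y => f x y ∈ A)).card := by
      simp only [Finset.card_filter, Fintype.sum_prod_type]
    _ ≤ ∑ x, (A.card + if ¬ Function.Injective (f x) then Fintype.card Y else 0) :=
      Finset.sum_le_sum fun x _ => hfiber x
    _ = _ := by
      rw [Finset.sum_add_distrib, Finset.sum_const, Finset.card_univ, smul_eq_mul,
        ← Finset.sum_filter, Finset.sum_const, smul_eq_mul]

end Counting

section Matrices

theorem injective_sum_smul_of_isUnit {ι R V : Type*} [Fintype ι] [DecidableEq ι]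
    [CommRing R] [AddCommGroup V] [Module R V] {M : Matrix ι ι R} (hM : IsUnit M) :
    Function.Injective (fun (t : ι → V) (j : ι) => ∑ i, M i j • t i) := by
  have hMT : IsUnit M.transpose := (Matrix.isUnit_transpose M).2 hM
  open scoped Matrix.Module in
  exact hMT.smul_bijective.injective

theorem card_square_matrix (n R : Type*) [Fintype n] [DecidableEq n] [Fintype R] :
    Fintype.card (Matrix n n R) = Fintype.card R ^ Fintype.card n ^ 2 := by
  rw [Fintype.card_congr Matrix.of.symm, Fintype.card_fun, Fintype.card_fun, sq, pow_mul]

variable (H : Type*) [Field H] [Fintype H] (m : ℕ)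

theorem card_GL_eq_pow_mul_prod :
    (Nat.card (GL (Fin m) H) : ℝ) = (Fintype.card H : ℝ) ^ m ^ 2 *
      ∏ j ∈ Finset.range m, (1 - (Fintype.card H : ℝ)⁻¹ ^ (j + 1)) := by
  have hq : (Fintype.card H : ℝ) ≠ 0 := Nat.cast_ne_zero.2 Fintype.card_ne_zero
  have hfactor (i : ℕ) (hi : i ∈ Finset.range m) :
      ((Fintype.card H ^ m - Fintype.card H ^ (m - 1 - i) : ℕ) : ℝ)
        = (Fintype.card H : ℝ) ^ m * (1 - (Fintype.card H : ℝ)⁻¹ ^ (i + 1)) := by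
    have hexp : m = m - 1 - i + (i + 1) := by have := Finset.mem_range.1 hi; omega
    have hpow : (Fintype.card H : ℝ) ^ m * (Fintype.card H : ℝ)⁻¹ ^ (i + 1)
        = (Fintype.card H : ℝ) ^ (m - 1 - i) := by
      rw [inv_pow, ← div_eq_mul_inv, div_eq_iff (pow_ne_zero _ hq), ← pow_add, ← hexp]
    rw [mul_sub, mul_one, hpow, Nat.cast_sub (Nat.pow_le_pow_right Fintype.card_pos (by omega)),
      Nat.cast_pow, Nat.cast_pow]
  rw [Matrix.card_GL_field,
    Fin.prod_univ_eq_prod_range (fun i => Fintype.card H ^ m - Fintype.card H ^ i) m,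
    ← Finset.prod_range_reflect, Nat.cast_prod, Finset.prod_congr rfl hfactor,
    Finset.prod_mul_distrib, Finset.prod_const, Finset.card_range, ← pow_mul, sq]

theorem one_sub_two_div_card_mul_le_card_GL :
    (1 - 2 / (Fintype.card H : ℝ)) * (Fintype.card H : ℝ) ^ m ^ 2 ≤ Nat.card (GL (Fin m) H) := by
  have hq : (2 : ℝ) ≤ Fintype.card H := mod_cast Fintype.one_lt_card (α := H)
  have hinv₁ : (Fintype.card H : ℝ)⁻¹ ≤ 1 := inv_le_one_of_one_le₀ (one_le_two.trans hq)
  rw [card_GL_eq_pow_mul_prod, mul_comm]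
  gcongr
  calc 1 - 2 / (Fintype.card H : ℝ)
    _ ≤ 1 - ∑ j ∈ Finset.range m, (Fintype.card H : ℝ)⁻¹ ^ (j + 1) :=
      sub_le_sub_left (sum_range_inv_pow_succ_le_two_div hq m) 1
    _ ≤ ∏ j ∈ Finset.range m, (1 - (Fintype.card H : ℝ)⁻¹ ^ (j + 1)) :=
      one_sub_sum_le_prod_one_sub _ (fun _ _ => by positivity)
        fun _ _ => pow_le_one₀ (by positivity) hinv₁

theorem card_filter_not_isUnit_matrix_le :
    ((Finset.univ.filter (fun M : Matrix (Fin m) (Fin m) H => ¬ IsUnit M)).card : ℝ)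
      ≤ 2 / (Fintype.card H : ℝ) * (Fintype.card H : ℝ) ^ m ^ 2 := by
  have hsplit : Nat.card (GL (Fin m) H)
      + (Finset.univ.filter (fun M : Matrix (Fin m) (Fin m) H => ¬ IsUnit M)).card
      = Fintype.card H ^ m ^ 2 := by
    rw [← card_filter_isUnit, Finset.card_filter_add_card_filter_not, Finset.card_univ,
      card_square_matrix, Fintype.card_fin]
  have hsplit_real := congrArg (Nat.cast : ℕ → ℝ) hsplit
  push_cast at hsplit_real
  linarith [one_sub_two_div_card_mul_le_card_GL H m]

end Matrices

theorem mixing_key_claim_general (H V : Type*) [Field H] [Fintype H] [AddCommGroup V] [Module H V]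
    [Fintype V] (m : ℕ) (A : Finset (Fin m → V)) (α : ℝ)
    (hα : (A.card : ℝ) = α * (Fintype.card V : ℝ) ^ m) :
    ((Finset.univ.filter (fun ht : (Fin m → (Fin m → H)) × (Fin m → V) =>
        (fun j => ∑ i, ht.1 i j • ht.2 i) ∈ A)).card : ℝ)
      ≤ (α + 2 / (Fintype.card H : ℝ))
          * (Fintype.card H : ℝ) ^ (m ^ 2) * (Fintype.card V : ℝ) ^ m := by
  let combine (M : Matrix (Fin m) (Fin m) H) (t : Fin m → V) (j : Fin m) : V := ∑ i, M i j • t i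
  have hcount := card_filter_prod_mem_le combine A
  have hsingular : (Finset.univ.filter (fun M => ¬ Function.Injective (combine M))).card
      ≤ (Finset.univ.filter (fun M : Matrix (Fin m) (Fin m) H => ¬ IsUnit M)).card :=
    Finset.card_le_card <| Finset.monotone_filter_right _ fun M _ hM hunit =>
      hM (injective_sum_smul_of_isUnit hunit)
  rw [card_square_matrix, Fintype.card_fun, Fintype.card_fin] at hcount
  calc _ ≤ (Fintype.card H : ℝ) ^ m ^ 2 * A.card
        + (Finset.univ.filter (fun M => ¬ Function.Injective (combine M))).card
          * (Fintype.card V : ℝ) ^ m := mod_cast hcount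
    _ ≤ (Fintype.card H : ℝ) ^ m ^ 2 * A.card
        + 2 / (Fintype.card H : ℝ) * (Fintype.card H : ℝ) ^ m ^ 2 * (Fintype.card V : ℝ) ^ m := by
      gcongr
      exact (Nat.cast_le.2 hsingular).trans (card_filter_not_isUnit_matrix_le H m)
    _ = _ := by rw [hα]; ring

/-- **Key mixing claim (Claim 3.4).**
Let `H` be a finite field and `F` an extension of `H` of degree `m ≥ 1`.
For any set `A ⊆ F^m` of size `α · |F|^m`, the number of tuples
`(h₁, …, h_m, t₁, …, t_m)` with `hᵢ ∈ H^m`, `tᵢ ∈ F` such that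
`∑ᵢ tᵢ • ι(hᵢ) ∈ A` is at most `(α + 2/|H|) · |H|^(m²) · |F|^m`,
where `ι` applies the field inclusion `H ↪ F` componentwise. -/
theorem mixing_key_claim (H F : Type*) [Field H] [Fintype H] [Field F] [Fintype F]
    [Algebra H F] (m : ℕ) (hm : 1 ≤ m) (hrank : Module.finrank H F = m)
    (A : Finset (Fin m → F)) (α : ℝ)
    (hα : (A.card : ℝ) = α * (Fintype.card F : ℝ) ^ m) :
    ((Finset.univ.filter (fun ht : (Fin m → (Fin m → H)) × (Fin m → F) =>
        (∑ i : Fin m, ht.2 i • fun j => algebraMap H F (ht.1 i j)) ∈ A)).card : ℝ)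
      ≤ (α + 2 / (Fintype.card H : ℝ))
          * (Fintype.card H : ℝ) ^ (m ^ 2) * (Fintype.card F : ℝ) ^ m := by
  convert mixing_key_claim_general H F m A α hα using 6
  simp [Algebra.smul_def, mul_comm]
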